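/- Let n ≥ 1. Then ∑_{d|n} c_d(n/d) equals m if n = m² is a perfect square (with m ≥ 1), and equals 0 if n is not a perfect square. -/

import Mathlib

/-- The Ramanujan sum `c_d(r)`: the sum of the `r`-th powers of all primitive
`d`-th roots of unity. -/
noncomputable def ramanujanSum (d r : ℕ) : ℂ :=
  ∑ m ∈ (Finset.range d).filter (fun m => Nat.gcd m d = 1),
    Complex.exp (2 * Real.pi * Complex.I * ((m : ℂ) * (r : ℂ) / (d : ℂ)))

lemma rs_eq (d r : ℕ) (hd : 0 < d) :
    ramanujanSum d r = ∑ z ∈ primitiveRoots d ℂ, z ^ r := by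
  unfold ramanujanSum
  have hp := Complex.isPrimitiveRoot_exp d hd.ne'
  have key : ∀ m : ℕ, Complex.exp (2 * Real.pi * Complex.I * ((m : ℂ) / (d : ℂ)))
      = Complex.exp (2 * Real.pi * Complex.I / (d : ℂ)) ^ m := by
    intro m
    rw [← Complex.exp_nat_mul]
    congr 1
    ring
  refine Finset.sum_bij
    (fun m _ => Complex.exp (2 * Real.pi * Complex.I * ((m : ℂ) / (d : ℂ)))) ?_ ?_ ?_ ?_
  · intro m hm
    rw [Finset.mem_filter, Finset.mem_range] at hm
    rw [mem_primitiveRoots hd, Complex.isPrimitiveRoot_iff _ _ hd.ne']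
    exact ⟨m, hm.1, hm.2, rfl⟩
  · intro a ha b hb hab
    rw [Finset.mem_filter, Finset.mem_range] at ha hb
    simp only [key] at hab
    exact hp.pow_inj ha.1 hb.1 hab
  · intro z hz
    rw [mem_primitiveRoots hd, Complex.isPrimitiveRoot_iff _ _ hd.ne'] at hz
    obtain ⟨m, h1, h2, h3⟩ := hz
    exact ⟨m, Finset.mem_filter.2 ⟨Finset.mem_range.2 h1, h2⟩, h3⟩
  · intro m _
    rw [← Complex.exp_nat_mul]
    congr 1
    ring

lemma sum_nthRoots_pow (d r : ℕ) (hd : 0 < d) :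
    ∑ z ∈ Polynomial.nthRootsFinset d (1 : ℂ), z ^ r = if d ∣ r then (d : ℂ) else 0 := by
  have hp := Complex.isPrimitiveRoot_exp d hd.ne'
  set w := Complex.exp (2 * Real.pi * Complex.I / (d : ℂ)) with hw
  have hw0 : w ≠ 0 := Complex.exp_ne_zero _
  split_ifs with h
  · obtain ⟨k, rfl⟩ := h
    rw [Finset.sum_congr rfl (g := fun _ => (1 : ℂ))]
    · simp [hp.card_nthRootsFinset]
    · intro z hz
      rw [Polynomial.mem_nthRootsFinset hd] at hz
      rw [pow_mul, hz, one_pow]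
  · have h1 : w ^ r ≠ 1 := fun h' => h ((hp.pow_eq_one_iff_dvd r).1 h')
    have h2 : ∑ z ∈ Polynomial.nthRootsFinset d (1 : ℂ), (w * z) ^ r
        = ∑ z ∈ Polynomial.nthRootsFinset d (1 : ℂ), z ^ r := by
      refine Finset.sum_nbij' (fun z => w * z) (fun z => w⁻¹ * z) ?_ ?_ ?_ ?_ ?_
      · intro z hz
        rw [Polynomial.mem_nthRootsFinset hd] at hz ⊢
        rw [mul_pow, hz, hp.pow_eq_one, one_mul]
      · intro z hz
        rw [Polynomial.mem_nthRootsFinset hd] at hz ⊢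
        rw [mul_pow, hz, inv_pow, hp.pow_eq_one, inv_one, one_mul]
      · intro z _
        field_simp
      · intro z _
        field_simp
      · intro z _
        rfl
    simp only [mul_pow, ← Finset.mul_sum] at h2
    by_contra h3
    exact h1 (mul_right_cancel₀ h3 (h2.trans (one_mul _).symm))

lemma sum_rs (d r : ℕ) (hd : 0 < d) :
    ∑ i ∈ d.divisors, ramanujanSum i r = if d ∣ r then (d : ℂ) else 0 := by
  have hp := Complex.isPrimitiveRoot_exp d hd.ne'
  have : NeZero d := ⟨hd.ne'⟩
  rw [← sum_nthRoots_pow d r hd, IsPrimitiveRoot.nthRoots_one_eq_biUnion_primitiveRoots,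
    Finset.sum_biUnion]
  · exact Finset.sum_congr rfl fun i hi => rs_eq i r (Nat.pos_of_mem_divisors hi)
  · intro a _ b _ hab
    exact IsPrimitiveRoot.disjoint hab

lemma rs_moebius (d r : ℕ) (hd : 0 < d) :
    ramanujanSum d r = ∑ x ∈ d.divisorsAntidiagonal,
      ((ArithmeticFunction.moebius x.1 : ℤ) : ℂ) * (if x.2 ∣ r then (x.2 : ℂ) else 0) :=
  ((ArithmeticFunction.sum_eq_iff_sum_mul_moebius_eq (R := ℂ)
    (f := fun i => ramanujanSum i r) (g := fun d => if d ∣ r then (d : ℂ) else 0)).1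
    (fun n hn => sum_rs n r hn) d hd).symm

lemma rs_inner_sum (b k : ℕ) (hb : 0 < b) (hk : 0 < k) :
    ∑ x ∈ k.divisorsAntidiagonal,
      ((ArithmeticFunction.moebius x.1 : ℤ) : ℂ) * (if b ∣ x.2 then (b : ℂ) else 0)
    = if k = b then (b : ℂ) else 0 := by
  by_cases h : b ∣ k
  · obtain ⟨j, rfl⟩ := h
    have hj : 0 < j := Nat.pos_of_mul_pos_left hk
    have h0 : ∑ x ∈ j.divisorsAntidiagonal, ((ArithmeticFunction.moebius x.1 : ℤ) : ℂ)
        = if j = 1 then 1 else 0 := by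
      have := congrArg (fun f => f j) ArithmeticFunction.moebius_mul_coe_zeta
      simp only [ArithmeticFunction.mul_apply, ArithmeticFunction.one_apply] at this
      rw [show (if j = 1 then (1 : ℂ) else 0) = (((if j = 1 then 1 else 0) : ℤ) : ℂ) by
        split_ifs <;> simp, ← this, Int.cast_sum]
      refine Finset.sum_congr rfl fun x hx => ?_
      have : x.2 ≠ 0 := (Nat.ne_zero_of_mem_divisorsAntidiagonal hx).2
      simp [this]
    have h1 : ∑ x ∈ (b * j).divisorsAntidiagonal,
        ((ArithmeticFunction.moebius x.1 : ℤ) : ℂ) * (if b ∣ x.2 then (b : ℂ) else 0)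
        = ∑ x ∈ j.divisorsAntidiagonal, ((ArithmeticFunction.moebius x.1 : ℤ) : ℂ) * b := by
      simp only [mul_ite, mul_zero]
      rw [← Finset.sum_filter]
      refine Finset.sum_nbij' (fun x => (x.1, x.2 / b)) (fun x => (x.1, b * x.2)) ?_ ?_ ?_ ?_ ?_
      · rintro ⟨x, y⟩ hx
        simp only [Finset.mem_filter, Nat.mem_divisorsAntidiagonal] at hx ⊢
        obtain ⟨⟨h1, h2⟩, c, rfl⟩ := hx
        rw [Nat.mul_div_cancel_left _ hb]
        refine ⟨Nat.eq_of_mul_eq_mul_left hb (by rw [← h1]; ring), hj.ne'⟩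
      · rintro ⟨x, y⟩ hx
        simp only [Finset.mem_filter, Nat.mem_divisorsAntidiagonal] at hx ⊢
        refine ⟨⟨by rw [← hx.1]; ring, hk.ne'⟩, dvd_mul_right _ _⟩
      · rintro ⟨x, y⟩ hx
        simp only [Finset.mem_filter] at hx
        simp [Nat.mul_div_cancel' hx.2]
      · rintro ⟨x, y⟩ hx
        simp [Nat.mul_div_cancel_left _ hb]
      · intro x _
        rfl
    rw [h1, ← Finset.sum_mul, h0]
    have : b * j = b ↔ j = 1 := by
      constructor
      · intro h
        exact Nat.eq_of_mul_eq_mul_left hb (by simpa using h)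
      · rintro rfl
        simp
    simp [this]
  · rw [if_neg (fun h' => h (by rw [h']))]
    refine Finset.sum_eq_zero fun x hx => ?_
    rw [if_neg, mul_zero]
    intro h'
    exact h (h'.trans ⟨x.1, by rw [mul_comm]; exact (Nat.mem_divisorsAntidiagonal.1 hx).1.symm⟩)

lemma total (n : ℕ) :
    ∑ d ∈ n.divisors, ramanujanSum d (n / d)
      = ∑ x ∈ n.divisorsAntidiagonal, if x.2 = x.1 then (x.1 : ℂ) else 0 := by
  rw [← Nat.sum_divisorsAntidiagonal (fun a b => ramanujanSum a b)]
  have hL : ∑ x ∈ n.divisorsAntidiagonal, ramanujanSum x.1 x.2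
      = ∑ x ∈ n.divisorsAntidiagonal, ∑ y ∈ x.1.divisorsAntidiagonal,
        ((ArithmeticFunction.moebius y.1 : ℤ) : ℂ) * (if y.2 ∣ x.2 then (y.2 : ℂ) else 0) :=
    Finset.sum_congr rfl fun x hx =>
      rs_moebius _ _ (Nat.pos_of_ne_zero (Nat.ne_zero_of_mem_divisorsAntidiagonal hx).1)
  have hR : ∑ x ∈ n.divisorsAntidiagonal, (if x.2 = x.1 then (x.1 : ℂ) else 0)
      = ∑ x ∈ n.divisorsAntidiagonal, ∑ y ∈ x.2.divisorsAntidiagonal,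
        ((ArithmeticFunction.moebius y.1 : ℤ) : ℂ) * (if x.1 ∣ y.2 then (x.1 : ℂ) else 0) :=
    Finset.sum_congr rfl fun x hx =>
      (rs_inner_sum _ _ (Nat.pos_of_ne_zero (Nat.ne_zero_of_mem_divisorsAntidiagonal hx).1)
        (Nat.pos_of_ne_zero (Nat.ne_zero_of_mem_divisorsAntidiagonal hx).2)).symm
  rw [hL, hR, Finset.sum_sigma', Finset.sum_sigma']
  refine Finset.sum_nbij'
    (fun ⟨⟨_, r⟩, ⟨a, b⟩⟩ => ⟨(b, a * r), (a, r)⟩)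
    (fun ⟨⟨b, _⟩, ⟨a, r⟩⟩ => ⟨(a * b, r), (a, b)⟩) ?_ ?_ ?_ ?_ ?_
  · rintro ⟨⟨d, r⟩, ⟨a, b⟩⟩ h
    simp only [Finset.mem_sigma, Nat.mem_divisorsAntidiagonal] at h ⊢
    obtain ⟨⟨rfl, h2⟩, rfl, h4⟩ := h
    refine ⟨⟨by ring, h2⟩, trivial, ?_⟩
    intro h
    apply h2
    rw [mul_right_comm, h, zero_mul]
  · rintro ⟨⟨b, k⟩, ⟨a, r⟩⟩ h
    simp only [Finset.mem_sigma, Nat.mem_divisorsAntidiagonal] at h ⊢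
    obtain ⟨⟨rfl, h2⟩, rfl, h4⟩ := h
    refine ⟨⟨by ring, h2⟩, trivial, ?_⟩
    intro h
    apply h2
    rw [← mul_assoc, mul_comm b a, h, zero_mul]
  · rintro ⟨⟨d, r⟩, ⟨a, b⟩⟩ h
    simp only [Finset.mem_sigma, Nat.mem_divisorsAntidiagonal] at h
    obtain ⟨⟨rfl, h2⟩, rfl, h4⟩ := h
    rfl
  · rintro ⟨⟨b, k⟩, ⟨a, r⟩⟩ h
    simp only [Finset.mem_sigma, Nat.mem_divisorsAntidiagonal] at h
    obtain ⟨⟨rfl, h2⟩, rfl, h4⟩ := h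
    rfl
  · rintro ⟨⟨d, r⟩, ⟨a, b⟩⟩ h
    rfl

theorem stmt_8 (n : ℕ) (hn : 1 ≤ n) :
    (∀ m : ℕ, 1 ≤ m → n = m ^ 2 →
      ∑ d ∈ n.divisors, ramanujanSum d (n / d) = (m : ℂ)) ∧
    ((¬ ∃ m : ℕ, n = m ^ 2) →
      ∑ d ∈ n.divisors, ramanujanSum d (n / d) = 0) := by
  rw [total]
  constructor
  · rintro m hm rfl
    rw [Finset.sum_eq_single (m, m)]
    · simp
    · rintro ⟨a, b⟩ h hne
      rw [if_neg]
      rintro h'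
      simp only at h'
      subst h'
      have h1 := (Nat.mem_divisorsAntidiagonal.1 h).1
      simp only [← pow_two] at h1
      have := Nat.pow_left_injective (n := 2) (by norm_num) h1
      exact hne (by rw [this])
    · intro h
      exact absurd (Nat.mem_divisorsAntidiagonal.2 ⟨(pow_two m).symm, by omega⟩) h
  · intro h
    refine Finset.sum_eq_zero fun x hx => ?_
    rw [if_neg]
    intro h'
    have h1 := (Nat.mem_divisorsAntidiagonal.1 hx).1
    rw [h', ← pow_two] at h1
    exact h ⟨_, h1.symm⟩
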